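/- Fix t ≥ 1 and define the substitution H on the alphabet Ξ by H(ξ_i) = Z_t ξ_{i+t+1} Z_t ξ_{t+1}, extended letterwise to words over Ξ. Then for every r ≥ 1 the word H(Z_r) is a factor of the Zimin word Z_{r+t+1}. -/

import Mathlib

/-- The Zimin words over the alphabet `Ξ = {ξ_1, ξ_2, ...}` (the letter `ξ_i`
is encoded by `i : ℕ`): `Z_1 = ξ_1`, `Z_{n+1} = Z_n ξ_{n+1} Z_n`
(with the convention `Z_0` empty). -/
def Zimin : ℕ → List ℕ
  | 0 => []
  | n + 1 => Zimin n ++ [n + 1] ++ Zimin n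

/-!
With `s = t + 1`, the word `Z_{r+s}` is `Z_r` with the letter `ξ_{i+s}` in place of each `ξ_i` and
a copy of `Z_s = Z_t ξ_{t+1} Z_t` before, between and after the letters. Grouping each copy with
the letter that follows it gives the image of `Z_r` under `ξ_i ↦ Z_t ξ_{t+1} Z_t ξ_{i+t+1}`.
Rotating the prefix `Z_t ξ_{t+1}` of each block to its end turns this substitution into `H`.
-/

theorem flatMap_append_left_append {α β : Type*} (u : List β) (f : α → List β) (w : List α) :
    w.flatMap (fun a => u ++ f a) ++ u = u ++ w.flatMap (fun a => f a ++ u) := by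
  induction w with
  | nil => simp
  | cons a w ih => simp only [List.flatMap_cons, List.append_assoc, ih]

theorem zimin_add (r s : ℕ) :
    Zimin (r + s) = (Zimin r).flatMap (fun i => Zimin s ++ [i + s]) ++ Zimin s := by
  induction r with
  | zero => rw [Nat.zero_add, Zimin, List.flatMap_nil, List.nil_append]
  | succ r ih =>
    rw [Nat.add_right_comm, Zimin, ih, Zimin, Nat.add_right_comm r s 1]
    simp only [List.flatMap_append, List.flatMap_singleton, List.append_assoc]

theorem zimin_add_add_one (r t : ℕ) :
    Zimin (r + t + 1) = Zimin t ++ [t + 1] ++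
      (Zimin r).flatMap (fun i => Zimin t ++ [i + t + 1] ++ Zimin t ++ [t + 1]) ++ Zimin t := by
  calc Zimin (r + t + 1)
      = (Zimin r).flatMap (fun i => (Zimin t ++ [t + 1]) ++ (Zimin t ++ [i + t + 1])) ++
          (Zimin t ++ [t + 1]) ++ Zimin t := by
        rw [Nat.add_assoc, zimin_add, Zimin]
        simp only [List.append_assoc, Nat.add_assoc]
    _ = Zimin t ++ [t + 1] ++
          (Zimin r).flatMap (fun i => Zimin t ++ [i + t + 1] ++ (Zimin t ++ [t + 1])) ++
          Zimin t := by
        rw [flatMap_append_left_append]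
    _ = Zimin t ++ [t + 1] ++
          (Zimin r).flatMap (fun i => Zimin t ++ [i + t + 1] ++ Zimin t ++ [t + 1]) ++
          Zimin t := by
        simp only [List.append_assoc]

/-- Fix `t ≥ 1` and let `H` be the substitution on `Ξ` defined by
`H(ξ_i) = Z_t ξ_{i+t+1} Z_t ξ_{t+1}`, extended letterwise. Then for every
`r ≥ 1` the word `H(Z_r)` is a factor of the Zimin word `Z_{r+t+1}`. -/
theorem H_of_zimin_is_factor (t : ℕ) (ht : 1 ≤ t) (r : ℕ) (hr : 1 ≤ r) :
    ((Zimin r).flatMap (fun i => Zimin t ++ [i + t + 1] ++ Zimin t ++ [t + 1]))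
      <:+: Zimin (r + t + 1) := by
  exact ⟨Zimin t ++ [t + 1], Zimin t, (zimin_add_add_one r t).symm⟩
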